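/- For every u ∈ ℝ³ with r := ‖u‖ satisfying r > 0 and sin(r) ≠ 0, the left Jacobian is invertible with the closed-form inverse J_L(u)⁻¹ = I − (1/2)·û + (1/r² − (1 + cos(r))/(2r·sin(r)))·û²; that is, J_L(u) · (I − (1/2)·û + (1/r² − (1 + cos(r))/(2r·sin(r)))·û²) = I. -/

import Mathlib

open Matrix

/-- The hat matrix of `u ∈ ℝ³`: the skew-symmetric matrix with `hat u *ᵥ v = u ×₃ v`. -/
def hat (u : Fin 3 → ℝ) : Matrix (Fin 3) (Fin 3) ℝ :=
  !![0, -u 2, u 1; u 2, 0, -u 0; -u 1, u 0, 0]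

/-- The left Jacobian of SO(3): `J_L(u) = Σ_{n≥0} ûⁿ/(n+1)!`. -/
noncomputable def JL (u : Fin 3 → ℝ) : Matrix (Fin 3) (Fin 3) ℝ :=
  ∑' k : ℕ, ((Nat.factorial (k + 1) : ℝ))⁻¹ • hat u ^ k

lemma hat_cube (u : Fin 3 → ℝ) (r : ℝ) (h : r ^ 2 = u 0 ^ 2 + u 1 ^ 2 + u 2 ^ 2) :
    hat u ^ 3 = (-r ^ 2) • hat u := by
  rw [h, pow_succ, pow_two]
  ext i j
  fin_cases i <;> fin_cases j <;>
    simp [hat, Matrix.mul_apply, Fin.sum_univ_three] <;> ring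

lemma hat_odd (u : Fin 3 → ℝ) (r : ℝ) (h : r ^ 2 = u 0 ^ 2 + u 1 ^ 2 + u 2 ^ 2) (k : ℕ) :
    hat u ^ (2 * k + 1) = ((-1) ^ k * r ^ (2 * k)) • hat u := by
  induction k with
  | zero => simp
  | succ k ih =>
    have : hat u ^ (2 * (k + 1) + 1) = hat u ^ (2 * k + 1) * hat u ^ 2 := by
      rw [← pow_add]; congr 1
    rw [this, ih, Matrix.smul_mul, ← pow_succ', hat_cube u r h, smul_smul]
    congr 1
    ring

lemma JL_closed (u : Fin 3 → ℝ) (r : ℝ) (h : r ^ 2 = u 0 ^ 2 + u 1 ^ 2 + u 2 ^ 2)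
    (hr0 : r ≠ 0) :
    JL u = 1 + ((1 - Real.cos r) / r ^ 2) • hat u
      + ((r - Real.sin r) / r ^ 3) • hat u ^ 2 := by
  have hc := (hasSum_nat_add_iff' 1).2 (Real.hasSum_cos r)
  have hsn := (hasSum_nat_add_iff' 1).2 (Real.hasSum_sin r)
  have ho : HasSum (fun k : ℕ => ((Nat.factorial (2 * k + 1 + 1) : ℝ))⁻¹ • hat u ^ (2 * k + 1))
      (((1 - Real.cos r) / r ^ 2) • hat u) := by
    have := (hc.mul_left (-1 / r ^ 2)).smul_const (hat u)
    convert this using 1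
    · funext k
      rw [hat_odd u r h, smul_smul]
      congr 1
      rw [show 2 * (k + 1) = 2 * k + 1 + 1 by ring]
      field_simp
      ring
    · congr 1
      simp
      field_simp
      ring
  have he : HasSum (fun k : ℕ => ((Nat.factorial (2 * k + 1) : ℝ))⁻¹ • hat u ^ (2 * k))
      (1 + ((r - Real.sin r) / r ^ 3) • hat u ^ 2) := by
    rw [← hasSum_nat_add_iff' 1]
    have := (hsn.mul_left (-1 / r ^ 3)).smul_const (hat u ^ 2)
    convert this using 1
    · rfl
    · funext k
      have h2 : hat u ^ (2 * (k + 1)) = hat u ^ (2 * k + 1) * hat u := by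
        rw [← pow_succ]; congr 1
      rw [h2, hat_odd u r h, Matrix.smul_mul, ← pow_two, smul_smul]
      congr 1
      field_simp
      ring
    · simp
      congr 1
      field_simp
      ring
  unfold JL
  rw [(HasSum.even_add_odd (f := fun k : ℕ => ((Nat.factorial (k + 1) : ℝ))⁻¹ • hat u ^ k)
    he ho).tsum_eq]
  abel

/-- For `u ∈ ℝ³` with Euclidean norm `r > 0` and `sin r ≠ 0`, the left
Jacobian is invertible with closed-form inverse
`J_L(u)⁻¹ = I − (1/2)·û + (1/r² − (1 + cos r)/(2r·sin r))·û²`; that is,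
`J_L(u) · (I − (1/2)·û + (1/r² − (1 + cos r)/(2r·sin r))·û²) = I`. -/
theorem so3_left_jacobian_inverse (u : Fin 3 → ℝ) (r : ℝ)
    (hr : r = Real.sqrt (u 0 ^ 2 + u 1 ^ 2 + u 2 ^ 2))
    (hr0 : 0 < r) (hs : Real.sin r ≠ 0) :
    IsUnit (JL u)
    ∧ JL u * (1 - (1 / 2 : ℝ) • hat u
        + (1 / r ^ 2 - (1 + Real.cos r) / (2 * r * Real.sin r)) • hat u ^ 2) = 1 := by
  have h : r ^ 2 = u 0 ^ 2 + u 1 ^ 2 + u 2 ^ 2 := by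
    rw [hr, Real.sq_sqrt (by positivity)]
  have key : JL u * (1 - (1 / 2 : ℝ) • hat u
        + (1 / r ^ 2 - (1 + Real.cos r) / (2 * r * Real.sin r)) • hat u ^ 2) = 1 := by
    rw [JL_closed u r h hr0.ne']
    have h3 := hat_cube u r h
    have h4 : hat u ^ 4 = (-r ^ 2) • hat u ^ 2 := by
      rw [pow_succ, h3, Matrix.smul_mul, ← pow_two]
    have gen : ∀ a b c : ℝ, (1 + a • hat u + b • hat u ^ 2) * (1 - (1 / 2 : ℝ) • hat u
        + c • hat u ^ 2) = 1 + (a - 1 / 2 - r ^ 2 * (a * c - b / 2)) • hat u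
          + (c + b - a / 2 - r ^ 2 * (b * c)) • hat u ^ 2 := by
      intro a b c
      have e : (1 + a • hat u + b • hat u ^ 2) * (1 - (1 / 2 : ℝ) • hat u
        + c • hat u ^ 2) = 1 + (a - 1 / 2) • hat u + (c + b - a / 2) • hat u ^ 2
          + (a * c - b / 2) • hat u ^ 3 + (b * c) • hat u ^ 4 := by
        have p1 : hat u * hat u = hat u ^ 2 := (pow_two _).symm
        have p2 : hat u * hat u ^ 2 = hat u ^ 3 := (pow_succ' _ 2).symm
        have p3 : hat u ^ 2 * hat u = hat u ^ 3 := (pow_succ _ 2).symm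
        have p4 : hat u ^ 2 * hat u ^ 2 = hat u ^ 4 := (pow_add _ 2 2).symm
        simp only [mul_add, add_mul, mul_sub, Matrix.smul_mul, Matrix.mul_smul, one_mul, mul_one,
          p1, p2, p3, p4, smul_smul]
        module
      rw [e, h3, h4]
      module
    have hsc := Real.sin_sq_add_cos_sq r
    have hc2 : Real.cos r ^ 2 = 1 - Real.sin r ^ 2 := by linarith
    rw [gen]
    have z1 : ((1 - Real.cos r) / r ^ 2 - 1 / 2 - r ^ 2 * ((1 - Real.cos r) / r ^ 2 *
        (1 / r ^ 2 - (1 + Real.cos r) / (2 * r * Real.sin r)) -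
        (r - Real.sin r) / r ^ 3 / 2)) = 0 := by
      field_simp
      ring_nf
      simp only [hc2]
      ring
    have z2 : (1 / r ^ 2 - (1 + Real.cos r) / (2 * r * Real.sin r)) + (r - Real.sin r) / r ^ 3
        - (1 - Real.cos r) / r ^ 2 / 2 - r ^ 2 * ((r - Real.sin r) / r ^ 3 *
        (1 / r ^ 2 - (1 + Real.cos r) / (2 * r * Real.sin r))) = 0 := by
      field_simp
      ring_nf
    rw [z1, z2]
    simp
  exact ⟨IsUnit.of_mul_eq_one _ key, key⟩
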